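/- In the Hilly regime (n^{3/2}V(A(n))/k(n) → ∞ and m(n)/(V(A(n))·n²) → c for a fixed constant c > 0, with k(n)/√n → ∞), under the standard distribution ST(m,n) the normalized statistic H_A(Z)/√(V(A)n²/m) converges in distribution to the standard normal distribution N(0,1) as n → ∞. -/

import Mathlib

/-!
Under ST(m,n) the normalised statistic is `∑ i, w i * z i` with `w i = (a i - k/n) / √(V m)`,
that is, a sum over the `m` independent balls of the weight of the chosen bin. Here
`∑ i, w i = 0` and `∑ i, w i ^ 2 = n / m` (`sum_hillyWeight`, `sum_hillyWeight_sq`). By the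
multinomial theorem its characteristic function at `t` is
`((1/n) ∑ i, exp (i t w i)) ^ m` (`charFun_linLaw`).

The condition on `∑ i, w i ^ 2` gives `|w i| ≤ √(n / m)` for every bin, so a third-order Taylor
bound shows that this characteristic function is within `|t|³ √(n / m) + t⁴ / (4 m)` of
`exp (-t² / 2)` (`norm_charFun_linLaw_sub_le`). It therefore suffices that `m / n → ∞`. In the
Hilly regime `n V = (n^{3/2} V / k) (k / √n) → ∞` and `m / n ~ c n V`, which is exactly this.
Lévy's convergence theorem gives weak convergence to `N(0,1)`, and the portmanteau theorem
turns it into convergence of distribution functions.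
-/

open Finset Filter Topology

/-- Probability of configuration `z` of `m` balls in `n` bins under the standard
(uniform multinomial) distribution ST(m,n). -/
noncomputable def stProb (n m : ℕ) (z : Fin n → ℕ) : ℝ :=
  if ∑ i, z i = m then
    ((Nat.factorial m : ℝ) / ∏ i, (Nat.factorial (z i) : ℝ)) * ((n : ℝ))⁻¹ ^ m
  else 0

/-- Probability of configuration `z` of `m` balls in `n` bins under the planted
distribution PL_A(m,n) with planting `a`. -/
noncomputable def plProb (n m : ℕ) (a : Fin n → ℕ) (z : Fin n → ℕ) : ℝ :=
  if (∑ i, z i = m) ∧ (∀ i, a i ≤ z i) then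
    ((Nat.factorial (m - ∑ i, a i) : ℝ) / ∏ i, (Nat.factorial (z i - a i) : ℝ)) *
      ((n : ℝ))⁻¹ ^ (m - ∑ i, a i)
  else 0

/-- Expectation of a statistic `T` with respect to a probability function `p` on
configurations. -/
noncomputable def expec {n : ℕ} (p : (Fin n → ℕ) → ℝ) (T : (Fin n → ℕ) → ℝ) : ℝ :=
  ∑' z : Fin n → ℕ, p z * T z

/-- Variance of a statistic `T` with respect to a probability function `p`. -/
noncomputable def varOf {n : ℕ} (p : (Fin n → ℕ) → ℝ) (T : (Fin n → ℕ) → ℝ) : ℝ :=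
  ∑' z : Fin n → ℕ, p z * (T z - expec p T) ^ 2

/-- Probability of a set `s` of configurations with respect to a probability
function `p`. -/
noncomputable def probOf {n : ℕ} (p : (Fin n → ℕ) → ℝ) (s : Set (Fin n → ℕ)) : ℝ :=
  ∑' z : Fin n → ℕ, Set.indicator s p z

/-- `V(A) = (Σ_i a_i²)/n − k²/n²` where `k = Σ_i a_i`. -/
noncomputable def plantV (n : ℕ) (a : Fin n → ℕ) : ℝ :=
  (∑ i, (a i : ℝ) ^ 2) / n - ((∑ i, (a i : ℝ)) / n) ^ 2

/-- `q_i = (n/m)(z_i − m/n)`. -/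
noncomputable def qStat (n m : ℕ) (z : Fin n → ℕ) (i : Fin n) : ℝ :=
  ((n : ℝ) / m) * ((z i : ℝ) - (m : ℝ) / n)

/-- The Hilly-regime statistic `H_A(Z) = Σ_i a_i q_i`. -/
noncomputable def HStat (n m : ℕ) (a : Fin n → ℕ) (z : Fin n → ℕ) : ℝ :=
  ∑ i, (a i : ℝ) * qStat n m z i

/-- The Flat-regime statistic `F_A(Z) = Σ_i a_i q_i²`. -/
noncomputable def FStat (n m : ℕ) (a : Fin n → ℕ) (z : Fin n → ℕ) : ℝ :=
  ∑ i, (a i : ℝ) * qStat n m z i ^ 2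

/-- The Intermediate-regime statistic `I_A(Z) = Σ_i a_i q_i − (1/2) Σ_i a_i q_i²`. -/
noncomputable def IStat (n m : ℕ) (a : Fin n → ℕ) (z : Fin n → ℕ) : ℝ :=
  HStat n m a z - (1/2) * FStat n m a z

/-- The standard normal cumulative distribution function `Φ`. -/
noncomputable def stdNormalCDF (x : ℝ) : ℝ :=
  ∫ t in Set.Iic x, Real.exp (-t ^ 2 / 2) / Real.sqrt (2 * Real.pi)

/-- Total variation distance `TV_A(m,n)` between ST(m,n) and PL_A(m,n). -/
noncomputable def tvDist (n m : ℕ) (a : Fin n → ℕ) : ℝ :=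
  (1/2) * ∑' z : Fin n → ℕ, |stProb n m z - plProb n m a z|

/-- The Flat regime: `n^{3/2} V(A)/k → 0` and `m/(k n^{1/2}) → c`. -/
def FlatRegime (A : (n : ℕ) → Fin n → ℕ) (m k : ℕ → ℕ) (c : ℝ) : Prop :=
  Tendsto (fun n : ℕ => (n : ℝ) ^ ((3 : ℝ)/2) * plantV n (A n) / (k n : ℝ)) atTop (𝓝 0) ∧
  Tendsto (fun n : ℕ => (m n : ℝ) / ((k n : ℝ) * Real.sqrt n)) atTop (𝓝 c)

/-- The Intermediate regime: `n^{3/2} V(A)/k → λ` and `m/(k n^{1/2}) → c`. -/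
def IntermediateRegime (A : (n : ℕ) → Fin n → ℕ) (m k : ℕ → ℕ) (lam c : ℝ) : Prop :=
  Tendsto (fun n : ℕ => (n : ℝ) ^ ((3 : ℝ)/2) * plantV n (A n) / (k n : ℝ)) atTop (𝓝 lam) ∧
  Tendsto (fun n : ℕ => (m n : ℝ) / ((k n : ℝ) * Real.sqrt n)) atTop (𝓝 c)

/-- The Hilly regime: `n^{3/2} V(A)/k → ∞` and `m/(V(A) n²) → c`. -/
def HillyRegime (A : (n : ℕ) → Fin n → ℕ) (m k : ℕ → ℕ) (c : ℝ) : Prop :=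
  Tendsto (fun n : ℕ => (n : ℝ) ^ ((3 : ℝ)/2) * plantV n (A n) / (k n : ℝ)) atTop atTop ∧
  Tendsto (fun n : ℕ => (m n : ℝ) / (plantV n (A n) * (n : ℝ) ^ 2)) atTop (𝓝 c)

/-- One of the three regimes holds (with its positive constants). -/
def SomeRegime (A : (n : ℕ) → Fin n → ℕ) (m k : ℕ → ℕ) : Prop :=
  (∃ c : ℝ, 0 < c ∧ FlatRegime A m k c) ∨
  (∃ lam c : ℝ, 0 < lam ∧ 0 < c ∧ IntermediateRegime A m k lam c) ∨
  (∃ c : ℝ, 0 < c ∧ HillyRegime A m k c)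

section Auxiliary

open MeasureTheory ProbabilityTheory

/-! ### The law of a linear statistic and its characteristic function -/

theorem stProb_nonneg (n m : ℕ) (z : Fin n → ℕ) : 0 ≤ stProb n m z := by
  unfold stProb
  split_ifs <;> positivity

theorem stProb_eq_multinomial {n m : ℕ} {z : Fin n → ℕ} (hz : z ∈ piAntidiag univ m) :
    stProb n m z = (Nat.multinomial univ z : ℝ) * ((n : ℝ))⁻¹ ^ m := by
  have hsum : ∑ i, z i = m := (mem_piAntidiag.1 hz).1
  have hspec := Nat.multinomial_spec univ z
  rw [hsum] at hspec
  have hspec' : (∏ i, (Nat.factorial (z i) : ℝ)) * (Nat.multinomial univ z : ℝ)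
      = (Nat.factorial m : ℝ) := by exact_mod_cast hspec
  have hpos : (∏ i, (Nat.factorial (z i) : ℝ)) ≠ 0 :=
    Finset.prod_ne_zero_iff.2 fun i _ => by positivity
  rw [stProb, if_pos hsum, ← hspec', mul_div_cancel_left₀ _ hpos]

theorem stProb_eq_zero {n m : ℕ} {z : Fin n → ℕ} (hz : z ∉ piAntidiag univ m) :
    stProb n m z = 0 := by
  rw [stProb, if_neg]
  intro h
  exact hz (mem_piAntidiag.2 ⟨h, fun i _ => mem_univ i⟩)

/-- The multinomial theorem, read as the joint generating function of ST(m,n). -/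
theorem sum_stProb_mul_prod_pow (n m : ℕ) (u : Fin n → ℂ) :
    ∑ z ∈ piAntidiag univ m, (stProb n m z : ℂ) * ∏ i, u i ^ z i
      = ((n : ℂ)⁻¹ * ∑ i, u i) ^ m := by
  rw [mul_pow, sum_pow_eq_sum_piAntidiag, Finset.mul_sum]
  refine Finset.sum_congr rfl fun z hz => ?_
  rw [stProb_eq_multinomial hz]
  push_cast
  ring

/-- The law of the linear statistic `z ↦ ∑ i, w i * z i` under ST(m,n), as a finite sum of
weighted point masses over the configurations with `m` balls. -/
noncomputable def linLaw (n m : ℕ) (w : Fin n → ℝ) : Measure ℝ :=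
  ∑ z ∈ piAntidiag univ m, ENNReal.ofReal (stProb n m z) • Measure.dirac (∑ i, w i * (z i : ℝ))

theorem linLaw_isProbabilityMeasure {n : ℕ} (hn : n ≠ 0) (m : ℕ) (w : Fin n → ℝ) :
    IsProbabilityMeasure (linLaw n m w) := by
  have h := sum_stProb_mul_prod_pow n m (fun _ => 1)
  have hn' : (n : ℂ) ≠ 0 := by exact_mod_cast hn
  simp only [one_pow, prod_const_one, mul_one, sum_const, card_univ, Fintype.card_fin,
    nsmul_eq_mul, inv_mul_cancel₀ hn'] at h
  have h' : ∑ z ∈ piAntidiag univ m, stProb n m z = 1 := by exact_mod_cast h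
  constructor
  simp only [linLaw, Measure.finsetSum_apply, Measure.smul_apply, measure_univ, smul_eq_mul,
    mul_one]
  rw [← ENNReal.ofReal_sum_of_nonneg (fun z _ => stProb_nonneg n m z), h', ENNReal.ofReal_one]

theorem linLaw_Iic (n m : ℕ) (w : Fin n → ℝ) (x : ℝ) :
    (linLaw n m w (Set.Iic x)).toReal
      = probOf (stProb n m) {z | ∑ i, w i * (z i : ℝ) ≤ x} := by
  classical
  rw [probOf, tsum_eq_sum (s := piAntidiag univ m)]
  · simp only [linLaw, Measure.finsetSum_apply, Measure.smul_apply, smul_eq_mul]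
    rw [ENNReal.toReal_sum]
    · refine Finset.sum_congr rfl fun z _ => ?_
      rw [Measure.dirac_apply' _ measurableSet_Iic]
      by_cases h : ∑ i, w i * (z i : ℝ) ≤ x
      · simp [Set.indicator, h, stProb_nonneg]
      · simp [Set.indicator, h]
    · intro z _
      exact ENNReal.mul_ne_top ENNReal.ofReal_ne_top (measure_ne_top _ _)
  · intro z hz
    simp [Set.indicator, stProb_eq_zero hz]

theorem charFun_linLaw (n m : ℕ) (w : Fin n → ℝ) (t : ℝ) :
    charFun (linLaw n m w) t
      = ((n : ℂ)⁻¹ * ∑ i, Complex.exp (((t * w i : ℝ) : ℂ) * Complex.I)) ^ m := by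
  rw [← sum_stProb_mul_prod_pow, charFun_apply_real, linLaw, integral_finsetSum_measure]
  · refine Finset.sum_congr rfl fun z _ => ?_
    rw [integral_smul_measure, integral_dirac, ENNReal.toReal_ofReal (stProb_nonneg n m z),
      Complex.real_smul]
    congr 1
    simp_rw [← Complex.exp_nat_mul]
    rw [← Complex.exp_sum]
    congr 1
    push_cast
    rw [Finset.mul_sum, Finset.sum_mul]
    exact Finset.sum_congr rfl fun i _ => by ring
  · intro z _
    refine Integrable.smul_measure ?_ ENNReal.ofReal_ne_top
    exact integrable_dirac (by simp)

/-! ### A quantitative central limit estimate -/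

theorem norm_pow_sub_pow_le_of_norm_le_one {a b : ℂ} (ha : ‖a‖ ≤ 1) (hb : ‖b‖ ≤ 1) (m : ℕ) :
    ‖a ^ m - b ^ m‖ ≤ m * ‖a - b‖ := by
  induction m with
  | zero => simp
  | succ m ih =>
    have h : a ^ (m + 1) - b ^ (m + 1) = (a ^ m - b ^ m) * a + b ^ m * (a - b) := by ring
    have hbm : ‖b ^ m‖ ≤ 1 := by rw [norm_pow]; exact pow_le_one₀ (norm_nonneg _) hb
    rw [h]
    refine (norm_add_le _ _).trans ?_
    rw [norm_mul, norm_mul]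
    have h1 := mul_le_mul_of_nonneg_left ha (norm_nonneg (a ^ m - b ^ m))
    have h2 := mul_le_mul_of_nonneg_right hbm (norm_nonneg (a - b))
    push_cast
    nlinarith

theorem norm_exp_mul_I_sub_taylor_le {x : ℝ} (hx : |x| ≤ 1) :
    ‖Complex.exp ((x : ℂ) * Complex.I) - (1 + x * Complex.I - (x : ℂ) ^ 2 / 2)‖ ≤ |x| ^ 3 := by
  have hnorm : ‖(x : ℂ) * Complex.I‖ = |x| := by simp
  have h := Complex.exp_bound (x := (x : ℂ) * Complex.I) (by rwa [hnorm]) (n := 3) (by norm_num)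
  rw [hnorm] at h
  have hs : ∑ j ∈ range 3, ((x : ℂ) * Complex.I) ^ j / (j.factorial : ℂ)
      = 1 + x * Complex.I - (x : ℂ) ^ 2 / 2 := by
    simp [Finset.sum_range_succ, mul_pow, Nat.factorial]
    ring
  rw [hs] at h
  refine h.trans ?_
  have h0 : 0 ≤ |x| ^ 3 := by positivity
  norm_num [Nat.factorial]
  linarith

/-- Explicit distance of the characteristic function of a centred linear statistic of unit
variance from that of `N(0,1)`. The variance condition `∑ w i ^ 2 = n / m` forces
`|w i| ≤ √(n / m)`, which turns the third absolute moment into the variance times `√(n / m)`. -/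
theorem norm_charFun_linLaw_sub_le {n m : ℕ} (hn : n ≠ 0) (hm : m ≠ 0) (w : Fin n → ℝ)
    (hw1 : ∑ i, w i = 0) (hw2 : ∑ i, w i ^ 2 = (n : ℝ) / m) (t : ℝ)
    (ht : |t| * √((n : ℝ) / m) ≤ 1) (ht' : t ^ 2 / (2 * m) ≤ 1) :
    ‖charFun (linLaw n m w) t - Complex.exp (-(t : ℂ) ^ 2 / 2)‖
      ≤ |t| ^ 3 * √((n : ℝ) / m) + t ^ 4 / (4 * m) := by
  have hn0 : (0 : ℝ) < n := by positivity
  have hm0 : (0 : ℝ) < m := by positivity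
  have hnC : (n : ℂ) ≠ 0 := by exact_mod_cast hn
  have hmC : (m : ℂ) ≠ 0 := by exact_mod_cast hm
  set δ := √((n : ℝ) / m) with hδ
  have hwi : ∀ i, |w i| ≤ δ := by
    intro i
    apply Real.abs_le_sqrt
    rw [← hw2]
    exact Finset.single_le_sum (f := fun i => w i ^ 2) (fun j _ => sq_nonneg _) (mem_univ i)
  have htw : ∀ i, |t * w i| ≤ |t| * δ := by
    intro i
    rw [abs_mul]
    exact mul_le_mul_of_nonneg_left (hwi i) (abs_nonneg t)
  set φ : ℂ := (n : ℂ)⁻¹ * ∑ i, Complex.exp (((t * w i : ℝ) : ℂ) * Complex.I) with hφ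
  set ψ : ℂ := Complex.exp ((-(t ^ 2 / (2 * m)) : ℝ) : ℂ) with hψ
  have hψpow : Complex.exp (-(t : ℂ) ^ 2 / 2) = ψ ^ m := by
    rw [hψ, ← Complex.exp_nat_mul]
    congr 1
    push_cast
    field_simp
  have hφ1 : ‖φ‖ ≤ 1 := by
    rw [hφ, norm_mul, norm_inv, Complex.norm_natCast]
    have : ‖∑ i, Complex.exp (((t * w i : ℝ) : ℂ) * Complex.I)‖ ≤ n := by
      refine (norm_sum_le _ _).trans ?_
      simp_rw [Complex.norm_exp_ofReal_mul_I]
      simp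
    rw [inv_mul_le_iff₀ hn0]
    simpa using this
  have hψ1 : ‖ψ‖ ≤ 1 := by
    rw [hψ, Complex.norm_exp_ofReal, Real.exp_le_one_iff]
    have : 0 ≤ t ^ 2 / (2 * m) := by positivity
    linarith
  -- Second-order expansion of the single-ball characteristic function.
  have hA : ‖φ - (1 - (t : ℂ) ^ 2 / (2 * m))‖ ≤ |t| ^ 3 * δ / m := by
    have hw1C : ∑ i, (w i : ℂ) = 0 := by exact_mod_cast hw1
    have hw2C : ∑ i, (w i : ℂ) ^ 2 = (n : ℂ) / m := by
      have h := congrArg Complex.ofReal hw2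
      push_cast at h
      exact h
    have hsum : ∑ i, (1 + ((t * w i : ℝ) : ℂ) * Complex.I - ((t * w i : ℝ) : ℂ) ^ 2 / 2)
        = n - (t : ℂ) ^ 2 / 2 * ((n : ℂ) / m) := by
      rw [← hw2C, Finset.sum_sub_distrib, Finset.sum_add_distrib, Finset.mul_sum]
      have h1 : ∑ i, ((t * w i : ℝ) : ℂ) * Complex.I = 0 := by
        have : ∑ i, ((t * w i : ℝ) : ℂ) * Complex.I = t * (∑ i, (w i : ℂ)) * Complex.I := by
          rw [Finset.mul_sum, Finset.sum_mul]
          exact Finset.sum_congr rfl fun i _ => by push_cast; ring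
        rw [this, hw1C]; simp
      rw [h1]
      simp only [sum_const, card_univ, Fintype.card_fin, nsmul_eq_mul, mul_one, add_zero]
      congr 1
      exact Finset.sum_congr rfl fun i _ => by push_cast; ring
    have heq : φ - (1 - (t : ℂ) ^ 2 / (2 * m)) = (n : ℂ)⁻¹ * ∑ i,
        (Complex.exp (((t * w i : ℝ) : ℂ) * Complex.I)
          - (1 + ((t * w i : ℝ) : ℂ) * Complex.I - ((t * w i : ℝ) : ℂ) ^ 2 / 2)) := by
      rw [Finset.sum_sub_distrib, hsum, mul_sub, ← hφ]
      congr 1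
      field_simp
    rw [heq, norm_mul, norm_inv, Complex.norm_natCast, inv_mul_le_iff₀ hn0]
    calc ‖∑ i, (Complex.exp (((t * w i : ℝ) : ℂ) * Complex.I)
          - (1 + ((t * w i : ℝ) : ℂ) * Complex.I - ((t * w i : ℝ) : ℂ) ^ 2 / 2))‖
        ≤ ∑ i, |t * w i| ^ 3 := by
          refine (norm_sum_le _ _).trans (Finset.sum_le_sum fun i _ => ?_)
          exact norm_exp_mul_I_sub_taylor_le ((htw i).trans ht)
      _ ≤ ∑ i, (|t| ^ 3 * δ) * w i ^ 2 := by
          refine Finset.sum_le_sum fun i _ => ?_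
          have h3 : |t * w i| ^ 3 = |t| ^ 3 * |w i| * w i ^ 2 := by
            rw [abs_mul, ← sq_abs (w i)]; ring
          rw [h3]
          have := hwi i
          gcongr
      _ = (n : ℝ) * (|t| ^ 3 * δ / m) := by
          rw [← Finset.mul_sum, hw2]; ring
  -- First-order expansion of the matching Gaussian factor.
  have hB : ‖ψ - (1 - (t : ℂ) ^ 2 / (2 * m))‖ ≤ (t ^ 2 / (2 * m)) ^ 2 := by
    have h0 : 0 ≤ t ^ 2 / (2 * m) := by positivity
    have h := Complex.norm_exp_sub_one_sub_id_le (x := ((-(t ^ 2 / (2 * m)) : ℝ) : ℂ))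
      (by rw [Complex.norm_real, Real.norm_eq_abs, abs_neg, abs_of_nonneg h0]; exact ht')
    rw [Complex.norm_real, Real.norm_eq_abs, abs_neg, abs_of_nonneg h0] at h
    convert h using 2
    rw [hψ]
    push_cast
    ring
  have hC : ‖φ - ψ‖ ≤ |t| ^ 3 * δ / m + (t ^ 2 / (2 * m)) ^ 2 := by
    have : φ - ψ = (φ - (1 - (t : ℂ) ^ 2 / (2 * m))) - (ψ - (1 - (t : ℂ) ^ 2 / (2 * m))) := by
      ring
    rw [this]
    exact (norm_sub_le _ _).trans (add_le_add hA hB)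
  rw [charFun_linLaw, hψpow, ← hφ]
  refine (norm_pow_sub_pow_le_of_norm_le_one hφ1 hψ1 m).trans ?_
  refine (mul_le_mul_of_nonneg_left hC hm0.le).trans (le_of_eq ?_)
  field_simp
  ring

/-! ### The Hilly regime -/

theorem card_mul_plantV {n : ℕ} (hn : n ≠ 0) (a : Fin n → ℕ) :
    ∑ i, ((a i : ℝ) - (∑ j, (a j : ℝ)) / n) ^ 2 = n * plantV n a := by
  have hn0 : (n : ℝ) ≠ 0 := by exact_mod_cast hn
  simp only [sub_sq, Finset.sum_add_distrib, Finset.sum_sub_distrib, sum_const, card_univ,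
    Fintype.card_fin, nsmul_eq_mul, plantV]
  rw [← Finset.sum_mul, ← Finset.mul_sum]
  field_simp
  ring

/-- Weight of a bin in the normalised statistic: its planting minus the average, over `√(V m)`. -/
noncomputable def hillyWeight (n m : ℕ) (a : Fin n → ℕ) (i : Fin n) : ℝ :=
  ((a i : ℝ) - (∑ j, (a j : ℝ)) / n) / √(plantV n a * m)

theorem sum_hillyWeight {n : ℕ} (hn : n ≠ 0) (m : ℕ) (a : Fin n → ℕ) :
    ∑ i, hillyWeight n m a i = 0 := by
  have hn0 : (n : ℝ) ≠ 0 := by exact_mod_cast hn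
  simp only [hillyWeight]
  rw [← Finset.sum_div, Finset.sum_sub_distrib]
  simp [mul_div_cancel₀ _ hn0]

theorem sum_hillyWeight_sq {n m : ℕ} (hn : n ≠ 0) (hm : m ≠ 0) {a : Fin n → ℕ}
    (hV : 0 < plantV n a) : ∑ i, hillyWeight n m a i ^ 2 = (n : ℝ) / m := by
  have hm0 : (0 : ℝ) < m := by positivity
  simp only [hillyWeight, div_pow]
  rw [← Finset.sum_div, card_mul_plantV hn, Real.sq_sqrt (by positivity)]
  field_simp

/-- The additive constants in `HStat` cancel because `∑ i, z i = m`. -/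
theorem HStat_div_eq {n m : ℕ} (hn : n ≠ 0) (hm : m ≠ 0) {a : Fin n → ℕ}
    (hV : 0 < plantV n a) {z : Fin n → ℕ} (hz : ∑ i, z i = m) :
    HStat n m a z / √(plantV n a * (n : ℝ) ^ 2 / m) = ∑ i, hillyWeight n m a i * (z i : ℝ) := by
  have hn0 : (0 : ℝ) < n := by positivity
  have hm0 : (0 : ℝ) < m := by positivity
  have hzR : ∑ i, (z i : ℝ) = m := by exact_mod_cast hz
  have hs : √(plantV n a * (n : ℝ) ^ 2 / m) = √(plantV n a * m) * (n / m) := by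
    rw [show plantV n a * (n : ℝ) ^ 2 / m = (plantV n a * m) * ((n : ℝ) / m) ^ 2 by field_simp,
      Real.sqrt_mul (by positivity), Real.sqrt_sq (by positivity)]
  have hpos : 0 < √(plantV n a * m) := by positivity
  have hH : HStat n m a z
      = (n / m : ℝ) * ∑ i, ((a i : ℝ) - (∑ j, (a j : ℝ)) / n) * (z i : ℝ) := by
    have hL : HStat n m a z = (n / m : ℝ) * ∑ i, (a i : ℝ) * z i - ∑ i, (a i : ℝ) := by
      rw [Finset.mul_sum, ← Finset.sum_sub_distrib]
      refine Finset.sum_congr rfl fun i _ => ?_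
      rw [qStat]
      field_simp
    simp only [sub_mul]
    rw [hL, Finset.sum_sub_distrib, ← Finset.mul_sum, hzR]
    field_simp
  rw [hs, hH]
  simp only [hillyWeight, div_mul_eq_mul_div]
  rw [← Finset.sum_div]
  field_simp

theorem probOf_HStat_eq {n m : ℕ} (hn : n ≠ 0) (hm : m ≠ 0) {a : Fin n → ℕ}
    (hV : 0 < plantV n a) (x : ℝ) :
    probOf (stProb n m) {z | HStat n m a z / √(plantV n a * (n : ℝ) ^ 2 / m) ≤ x}
      = (linLaw n m (hillyWeight n m a) (Set.Iic x)).toReal := by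
  classical
  rw [linLaw_Iic, probOf, probOf]
  congr 1
  ext z
  by_cases hz : ∑ i, z i = m
  · simp only [Set.indicator, Set.mem_ofPred_eq, HStat_div_eq hn hm hV hz]
  · simp [Set.indicator, stProb, hz]

theorem stdNormalCDF_eq (x : ℝ) : stdNormalCDF x = (gaussianReal 0 1 (Set.Iic x)).toReal := by
  rw [gaussianReal_apply_eq_integral 0 one_ne_zero, ENNReal.toReal_ofReal
    (setIntegral_nonneg measurableSet_Iic fun y _ => gaussianPDFReal_nonneg 0 1 y), stdNormalCDF]
  congr 1
  ext y
  simp [gaussianPDFReal]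
  ring

/-- In the Hilly regime `n V → ∞`, being the product of `n^{3/2} V / k` and `k / √n`. -/
theorem hilly_tendsto_mul_plantV {A : (n : ℕ) → Fin n → ℕ} {k : ℕ → ℕ}
    (hk : Tendsto (fun n : ℕ => (k n : ℝ) / √n) atTop atTop)
    (h : Tendsto (fun n : ℕ => (n : ℝ) ^ ((3 : ℝ)/2) * plantV n (A n) / (k n : ℝ)) atTop atTop) :
    Tendsto (fun n : ℕ => (n : ℝ) * plantV n (A n)) atTop atTop := by
  refine (h.atTop_mul_atTop₀ hk).congr' ?_
  filter_upwards [hk.eventually_gt_atTop 0, eventually_gt_atTop 0] with n hkn hn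
  have hn0 : (0 : ℝ) < n := by positivity
  have hs : 0 < √(n : ℝ) := by positivity
  have hk0 : (k n : ℝ) ≠ 0 := by
    intro h0
    simp [h0] at hkn
  have hp : (n : ℝ) ^ ((3 : ℝ)/2) = n * √n := by
    rw [Real.sqrt_eq_rpow, show (3 : ℝ) / 2 = 1 + 1 / 2 by norm_num, Real.rpow_add hn0,
      Real.rpow_one]
  rw [hp]
  field_simp

/-- In the Hilly regime the number of balls per bin tends to infinity. -/
theorem hilly_tendsto_div {A : (n : ℕ) → Fin n → ℕ} {m : ℕ → ℕ} {c : ℝ} (hc : 0 < c)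
    (hV : Tendsto (fun n : ℕ => (n : ℝ) * plantV n (A n)) atTop atTop)
    (h : Tendsto (fun n : ℕ => (m n : ℝ) / (plantV n (A n) * (n : ℝ) ^ 2)) atTop (𝓝 c)) :
    Tendsto (fun n : ℕ => (m n : ℝ) / n) atTop atTop := by
  refine (h.pos_mul_atTop hc hV).congr' ?_
  filter_upwards [hV.eventually_gt_atTop 0, eventually_gt_atTop 0] with n hVn hn
  have hn0 : (0 : ℝ) < n := by positivity
  have hV0 : plantV n (A n) ≠ 0 := by
    intro h0
    simp [h0] at hVn
  field_simp

end Auxiliary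

open MeasureTheory ProbabilityTheory in
/-- in the Hilly regime, under ST(m,n) the normalized statistic
`H_A/√(V(A)n²/m)` converges in distribution to `N(0,1)`. -/
theorem hstat_st_normal (A : (n : ℕ) → Fin n → ℕ) (m k : ℕ → ℕ)
    (hka : ∀ n, ∑ i, A n i = k n) (hkm : ∀ n, k n ≤ m n)
    (hk : Tendsto (fun n : ℕ => (k n : ℝ) / Real.sqrt n) atTop atTop)
    (c : ℝ) (hc : 0 < c) (hreg : HillyRegime A m k c) :
    ∀ x : ℝ, Tendsto (fun n : ℕ => probOf (stProb n (m n))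
        {z | HStat n (m n) (A n) z /
          Real.sqrt (plantV n (A n) * (n : ℝ) ^ 2 / m n) ≤ x})
      atTop (𝓝 (stdNormalCDF x)) := by
  intro x
  obtain ⟨h1, h2⟩ := hreg
  have hV := hilly_tendsto_mul_plantV hk h1
  have hmn := hilly_tendsto_div hc hV h2
  have hgood : ∀ᶠ n : ℕ in atTop, n ≠ 0 ∧ m n ≠ 0 ∧ 0 < plantV n (A n) := by
    filter_upwards [hV.eventually_gt_atTop 0, hmn.eventually_gt_atTop 0, eventually_ne_atTop 0]
      with n ha hb hn
    refine ⟨hn, fun h0 => by simp [h0] at hb, ?_⟩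
    exact pos_of_mul_pos_right ha (Nat.cast_nonneg n)
  have hm : Tendsto (fun n => (m n : ℝ)) atTop atTop := by
    refine tendsto_atTop_mono' _ ?_ hmn
    filter_upwards [eventually_ge_atTop 1] with n hn
    exact div_le_self (Nat.cast_nonneg _) (by exact_mod_cast hn)
  have hδ : Tendsto (fun n : ℕ => √((n : ℝ) / m n)) atTop (𝓝 0) := by
    have := hmn.inv_tendsto_atTop
    have h3 := (Real.continuous_sqrt.tendsto 0).comp this
    rw [Real.sqrt_zero] at h3
    refine h3.congr fun n => ?_
    simp
  -- Lévy's theorem needs probability measures at every index, which rules out zero bins.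
  have hprob : ∀ n : ℕ, IsProbabilityMeasure
      (linLaw (n + 1) (m (n + 1)) (hillyWeight (n + 1) (m (n + 1)) (A (n + 1)))) :=
    fun n => linLaw_isProbabilityMeasure (Nat.succ_ne_zero n) _ _
  let μ : ℕ → ProbabilityMeasure ℝ := fun n =>
    ⟨linLaw (n + 1) (m (n + 1)) (hillyWeight (n + 1) (m (n + 1)) (A (n + 1))), hprob n⟩
  let γ : ProbabilityMeasure ℝ := ⟨gaussianReal 0 1, inferInstance⟩
  have hweak : Tendsto μ atTop (𝓝 γ) := by
    refine ProbabilityMeasure.tendsto_of_tendsto_charFun fun t => ?_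
    have hγ : charFun (γ : Measure ℝ) t = Complex.exp (-(t : ℂ) ^ 2 / 2) := by
      change charFun (gaussianReal 0 1) t = _
      rw [charFun_gaussianReal]
      congr 1
      simp
      ring
    rw [hγ]
    change Tendsto (fun n => charFun (linLaw (n + 1) (m (n + 1))
      (hillyWeight (n + 1) (m (n + 1)) (A (n + 1)))) t) atTop _
    refine (tendsto_add_atTop_iff_nat (f := fun n => charFun (linLaw n (m n)
      (hillyWeight n (m n) (A n))) t) 1).2 ?_
    rw [tendsto_iff_norm_sub_tendsto_zero]
    have hbound : Tendsto (fun n : ℕ => |t| ^ 3 * √((n : ℝ) / m n) + t ^ 4 / (4 * m n))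
        atTop (𝓝 0) := by
      have ha := hδ.const_mul (|t| ^ 3)
      have hb := (hm.const_mul_atTop (show (0 : ℝ) < 4 by norm_num)).const_div_atTop (t ^ 4)
      simpa using ha.add hb
    have hs1 : ∀ᶠ n : ℕ in atTop, |t| * √((n : ℝ) / m n) ≤ 1 := by
      have ha := hδ.const_mul |t|
      rw [mul_zero] at ha
      exact ha.eventually_le_const one_pos
    have hs2 : ∀ᶠ n : ℕ in atTop, t ^ 2 / (2 * m n) ≤ 1 :=
      ((hm.const_mul_atTop (show (0 : ℝ) < 2 by norm_num)).const_div_atTop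
        (t ^ 2)).eventually_le_const one_pos
    refine squeeze_zero' (Eventually.of_forall fun n => norm_nonneg _) ?_ hbound
    filter_upwards [hgood, hs1, hs2] with n hg ht ht'
    obtain ⟨hn, hmn0, hVn⟩ := hg
    exact norm_charFun_linLaw_sub_le hn hmn0 _ (sum_hillyWeight hn _ _)
      (sum_hillyWeight_sq hn hmn0 hVn) t ht ht'
  have hport := ProbabilityMeasure.tendsto_measure_of_null_frontier_of_tendsto' hweak
    (E := Set.Iic x) (by
      rw [frontier_Iic]
      have : NullSingletonClass (gaussianReal 0 1) := nullSingletonClass_gaussianReal one_ne_zero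
      exact measure_singleton (μ := gaussianReal 0 1) x)
  have hport' := (ENNReal.tendsto_toReal (measure_ne_top (γ : Measure ℝ) (Set.Iic x))).comp hport
  rw [stdNormalCDF_eq]
  have hlim : Tendsto (fun n => (linLaw n (m n) (hillyWeight n (m n) (A n)) (Set.Iic x)).toReal)
      atTop (𝓝 (gaussianReal 0 1 (Set.Iic x)).toReal) :=
    (tendsto_add_atTop_iff_nat 1).1 hport'
  refine hlim.congr' ?_
  filter_upwards [hgood] with n hg
  exact (probOf_HStat_eq hg.1 hg.2.1 hg.2.2 x).symm
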